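/- Let m ≥ 3 be an integer with an odd factor and let ε = (ε_1,…,ε_m) ∈ {±1}^m satisfy ∑_{j=1}^m ε_j·e^{ijπ/m} = 0. For j = 1,…,m define a_j = (cos(jπ/(2m)), sin(jπ/(2m))) if ε_j = 1, and a_j = (cos(jπ/(2m) + π/2), sin(jπ/(2m) + π/2)) if ε_j = −1. Then the matrix A = [a_1,…,a_m]ᵀ ∈ ℝ^{m×2} has minimal condition number: β_A = min{β_M : M ∈ ℝ^{m×2}} = (1 − 1/(m·sin(π/(2m))))^{−1/2}. -/

import Mathlib

noncomputable section

open Real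
open scoped RealInnerProductSpace ENNReal

/-- ℝ² as a Euclidean space. -/
abbrev E2 : Type := EuclideanSpace ℝ (Fin 2)

/-- The vector `(x, y)` in ℝ². -/
def vec2 (x y : ℝ) : E2 := (WithLp.equiv 2 (Fin 2 → ℝ)).symm ![x, y]

/-- The coordinates of a vector in ℝ². -/
def toFun2 (v : E2) : Fin 2 → ℝ := WithLp.equiv 2 (Fin 2 → ℝ) v

/-- The phaseless measurement map `Φ_A(x) = (|⟨a_j, x⟩|)_j`. -/
def PhiMap {m : ℕ} (a : Fin m → E2) (x : E2) : EuclideanSpace ℝ (Fin m) :=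
  (WithLp.equiv 2 (Fin m → ℝ)).symm fun j => |⟪a j, x⟫|

/-- The distance `dist(x,y) = min ‖x − y‖ ‖x + y‖` (real phase retrieval distance). -/
def pdist (x y : E2) : ℝ := min ‖x - y‖ ‖x + y‖

/-- The set of Lipschitz ratios of the phaseless measurement map. -/
def ratioSet {m : ℕ} (a : Fin m → E2) : Set ℝ :=
  {r | ∃ x y : E2, pdist x y ≠ 0 ∧ r = ‖PhiMap a x - PhiMap a y‖ / pdist x y}

/-- The optimal lower Lipschitz constant `L_A`. -/
def lipL {m : ℕ} (a : Fin m → E2) : ℝ := sInf (ratioSet a)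

/-- The optimal upper Lipschitz constant `U_A`. -/
def lipU {m : ℕ} (a : Fin m → E2) : ℝ := sSup (ratioSet a)

/-- The condition number `β_A = U_A / L_A`, with `β_A = +∞` when `L_A = 0`. -/
def condNum {m : ℕ} (a : Fin m → E2) : ℝ≥0∞ :=
  if lipL a = 0 then ⊤ else ENNReal.ofReal (lipU a / lipL a)

/-- An edge family: nonzero vectors with pairwise distinct directions summing to zero
(the edge vectors of a strictly convex polygon). -/
def IsEdgeFamily {m : ℕ} (e : Fin m → E2) : Prop :=
  (∀ j, e j ≠ 0) ∧
  (∀ i j : Fin m, i ≠ j → ‖e i‖⁻¹ • e i ≠ ‖e j‖⁻¹ • e j) ∧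
  ∑ j, e j = 0

/-- The diameter-to-perimeter ratio of the polygon with edge vectors `e`. -/
def rRatio {m : ℕ} (e : Fin m → E2) : ℝ :=
  sSup {s | ∃ u : E2, ‖u‖ = 1 ∧ s = ∑ j, |⟪e j, u⟫|} / (2 * ∑ j, ‖e j‖)

/-- An optimal edge family: minimizes `rRatio` among all edge families of size `m`. -/
def IsOptimalEdgeFamily {m : ℕ} (e : Fin m → E2) : Prop :=
  IsEdgeFamily e ∧ ∀ e' : Fin m → E2, IsEdgeFamily e' → rRatio e ≤ rRatio e'

/-- The complex square map on ℝ² ≅ ℂ: `f(t·(cos φ, sin φ)) = t²·(cos 2φ, sin 2φ)`. -/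
def csq (v : E2) : E2 :=
  vec2 (toFun2 v 0 ^ 2 - toFun2 v 1 ^ 2) (2 * toFun2 v 0 * toFun2 v 1)

/-- The harmonic frame `E_m`: the `j`-th row is `(cos((j−1)π/m), sin((j−1)π/m))`, `j = 1,…,m`. -/
def harmonicFrame (m : ℕ) : Fin m → E2 :=
  fun j => vec2 (Real.cos ((j : ℕ) * π / m)) (Real.sin ((j : ℕ) * π / m))

/-!
Put `u = x + y` and `v = x - y`. Then `‖Φ_a x - Φ_a y‖²` is `∑ min (⟪a_j, u⟫², ⟪a_j, v⟫²)` and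
`dist (x, y)` is `min (‖u‖, ‖v‖)`. The complex square `z_j = a_j²` linearizes this, because
`2 ⟪a, u⟫² = ‖a‖² ‖u‖² + ⟪a², u²⟫`. With `P = ∑ ‖a_j‖² = ∑ ‖z_j‖`, one gets `P ≤ 2 U²` by averaging
over an orthonormal basis, and `2 L² ≤ P - ∑ |⟪z_j, w⟫|` for every unit vector `w = u² = -v²`;
if `∑ z_j = 0`, the bounds `2 U² ≤ P` and `P - sup_w ∑ |⟪z_j, w⟫| ≤ 2 L²` hold as well.

What remains is Reinhardt's inequality `∑ ‖z_j‖ ≤ m sin (π / (2 m)) sup_w ∑ |⟪z_j, w⟫|`, with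
equality for signed equispaced directions. Let the lines `ℝ z_j` cut a half-turn into intervals of
lengths `g_k` with midpoints `μ_k`. Integrating `|sin (x - θ)|` interval by interval gives
`∑ sin (g_k / 2) |sin (μ_k - θ)| ≤ 1`, with equality when `θ` is a division point. Summing the
equalities over the `z_j` bounds `∑ ‖z_j‖` by `∑ sin (g_k / 2)` times the largest sum
`∑ |⟪z_j, w⟫|` over the `w` orthogonal to some `μ_k`, and `∑ sin (g_k / 2) ≤ m sin (π / (2 m))`
by concavity of the sine. For equispaced directions all `g_k` are `π / m`, and the inequality for
arbitrary `θ` gives the converse.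
-/

theorem integral_abs_sin_sub (a θ : ℝ) : ∫ x in a..a + π, |sin (x - θ)| = 2 := by
  have hper : Function.Periodic (fun x => |sin x|) π := fun x => by simp [sin_add_pi]
  have hcongr : Set.EqOn (fun x => |sin x|) sin (Set.uIcc 0 π) := fun x hx =>
    abs_of_nonneg (sin_nonneg_of_mem_Icc (by rwa [Set.uIcc_of_le pi_pos.le] at hx))
  rw [intervalIntegral.integral_comp_sub_right (fun x => |sin x|), add_sub_right_comm,
    hper.intervalIntegral_add_eq (a - θ) 0, zero_add, intervalIntegral.integral_congr hcongr,
    integral_sin, cos_zero, cos_pi]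
  norm_num

theorem abs_integral_sin_sub {a b : ℝ} (hab : a ≤ b) (hba : b ≤ a + 2 * π) (θ : ℝ) :
    |∫ x in a..b, sin (x - θ)| = 2 * (sin ((b - a) / 2) * |sin ((a + b) / 2 - θ)|) := by
  have hgap : 0 ≤ sin ((b - a) / 2) :=
    sin_nonneg_of_nonneg_of_le_pi (by linarith) (by linarith)
  rw [intervalIntegral.integral_comp_sub_right sin, integral_sin, cos_sub_cos,
    show (a - θ + (b - θ)) / 2 = (a + b) / 2 - θ by ring,
    show (a - θ - (b - θ)) / 2 = -((b - a) / 2) by ring, sin_neg, abs_mul, abs_mul, abs_neg,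
    abs_neg, abs_two, abs_of_nonneg hgap]
  ring

theorem abs_integral_sin_sub_eq_integral_abs {a b θ : ℝ} (hab : a ≤ b)
    (h : θ ≤ a ∧ b ≤ θ + π ∨ b ≤ θ ∧ θ - π ≤ a) :
    |∫ x in a..b, sin (x - θ)| = ∫ x in a..b, |sin (x - θ)| := by
  have hnonneg : 0 ≤ ∫ x in a..b, |sin (x - θ)| :=
    intervalIntegral.integral_nonneg hab fun _ _ => abs_nonneg _
  rcases h with ⟨ha, hb⟩ | ⟨hb, ha⟩
  · have hcongr : Set.EqOn (fun x => |sin (x - θ)|) (fun x => sin (x - θ)) (Set.uIcc a b) := by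
      intro x hx
      rw [Set.uIcc_of_le hab] at hx
      exact abs_of_nonneg (sin_nonneg_of_nonneg_of_le_pi (by linarith [hx.1]) (by linarith [hx.2]))
    rw [← intervalIntegral.integral_congr hcongr, abs_of_nonneg hnonneg]
  · have hcongr : Set.EqOn (fun x => |sin (x - θ)|) (fun x => -sin (x - θ)) (Set.uIcc a b) := by
      intro x hx
      rw [Set.uIcc_of_le hab] at hx
      exact abs_of_nonpos
        (sin_nonpos_of_nonpos_of_neg_pi_le (by linarith [hx.2]) (by linarith [hx.1]))
    rw [← abs_of_nonneg hnonneg, intervalIntegral.integral_congr hcongr,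
      intervalIntegral.integral_neg, abs_neg]

section HalfTurn

variable {T : ℕ → ℝ} {m : ℕ}

theorem sum_integral_abs_sin_sub (hTm : T m = T 0 + π) (θ : ℝ) :
    ∑ k ∈ Finset.range m, ∫ x in T k..T (k + 1), |sin (x - θ)| = 2 := by
  have hcont : Continuous fun x => |sin (x - θ)| := by fun_prop
  rw [intervalIntegral.sum_integral_adjacent_intervals
    fun k _ => hcont.intervalIntegrable (T k) (T (k + 1)), hTm, integral_abs_sin_sub]

theorem gap_mem_Icc (hT : Monotone T) (hTm : T m = T 0 + π) {k : ℕ} (hk : k < m) :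
    T (k + 1) - T k ∈ Set.Icc 0 π := by
  constructor <;> linarith [hT k.le_succ, hT (Nat.succ_le_of_lt hk), hT k.zero_le]

theorem sum_sin_half_gap_mul_abs_sin_le (hT : Monotone T) (hTm : T m = T 0 + π) (θ : ℝ) :
    ∑ k ∈ Finset.range m, sin ((T (k + 1) - T k) / 2) * |sin ((T k + T (k + 1)) / 2 - θ)| ≤ 1 := by
  suffices h : 2 * ∑ k ∈ Finset.range m,
      sin ((T (k + 1) - T k) / 2) * |sin ((T k + T (k + 1)) / 2 - θ)| ≤ 2 by linarith
  rw [Finset.mul_sum]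
  refine (Finset.sum_le_sum fun k hk => ?_).trans_eq (sum_integral_abs_sin_sub hTm θ)
  have hgap := gap_mem_Icc hT hTm (Finset.mem_range.1 hk)
  rw [← abs_integral_sin_sub (hT k.le_succ) (by linarith [hgap.2, pi_pos])]
  exact intervalIntegral.abs_integral_le_integral_abs (hT k.le_succ)

-- Seen from a division point `T j`, `x ↦ sin (x - T j)` keeps its sign on each interval of the
-- subdivision, so the triangle inequality for integrals is sharp.
theorem sum_sin_half_gap_mul_abs_sin_eq (hT : Monotone T) (hTm : T m = T 0 + π) {j : ℕ}
    (hj : j ≤ m) :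
    ∑ k ∈ Finset.range m, sin ((T (k + 1) - T k) / 2) * |sin ((T k + T (k + 1)) / 2 - T j)| =
      1 := by
  suffices h : 2 * ∑ k ∈ Finset.range m,
      sin ((T (k + 1) - T k) / 2) * |sin ((T k + T (k + 1)) / 2 - T j)| = 2 by linarith
  rw [Finset.mul_sum]
  refine (Finset.sum_congr rfl fun k hk => ?_).trans (sum_integral_abs_sin_sub hTm (T j))
  rw [Finset.mem_range] at hk
  have hgap := gap_mem_Icc hT hTm hk
  rw [← abs_integral_sin_sub (hT k.le_succ) (by linarith [hgap.2, pi_pos])]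
  apply abs_integral_sin_sub_eq_integral_abs (hT k.le_succ)
  rcases lt_or_ge k j with hkj | hjk
  · exact .inr ⟨hT hkj, by linarith [hT hj, hT k.zero_le]⟩
  · exact .inl ⟨hT hjk, by linarith [hT (Nat.succ_le_of_lt hk), hT j.zero_le]⟩

end HalfTurn

theorem sum_sin_le_card_mul_sin {ι : Type*} {s : Finset ι} (hs : s.Nonempty) {x : ι → ℝ}
    (hx : ∀ i ∈ s, x i ∈ Set.Icc 0 π) :
    ∑ i ∈ s, sin (x i) ≤ s.card * sin ((∑ i ∈ s, x i) / s.card) := by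
  have hcard : (0 : ℝ) < s.card := by exact_mod_cast hs.card_pos
  have hJensen := strictConcaveOn_sin_Icc.concaveOn.le_map_sum (t := s)
    (w := fun _ => (s.card : ℝ)⁻¹) (fun _ _ => by positivity) (by simp [hcard.ne']) hx
  simp only [smul_eq_mul, ← Finset.mul_sum] at hJensen
  rwa [inv_mul_le_iff₀ hcard, inv_mul_eq_div] at hJensen

theorem sum_sin_half_gap_le {T : ℕ → ℝ} {m : ℕ} (hT : Monotone T) (hTm : T m = T 0 + π) :
    ∑ k ∈ Finset.range m, sin ((T (k + 1) - T k) / 2) ≤ m * sin (π / (2 * m)) := by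
  rcases m.eq_zero_or_pos with rfl | hm
  · simp
  · have h := sum_sin_le_card_mul_sin (x := fun k => (T (k + 1) - T k) / 2)
      (Finset.nonempty_range_iff.2 hm.ne') fun k hk => by
        have hgap := gap_mem_Icc hT hTm (Finset.mem_range.1 hk)
        exact ⟨by linarith [hgap.1], by linarith [hgap.2, pi_pos]⟩
    rwa [Finset.card_range, ← Finset.sum_div, Finset.sum_range_sub, hTm, add_sub_cancel_left,
      div_div] at h

theorem exists_sum_le_mul_sum_abs_sin_of_subdivision {ι : Type*} [Fintype ι] {T : ℕ → ℝ} {m : ℕ}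
    (hT : Monotone T) (hTm : T m = T 0 + π) {θ : ι → ℝ} (hθ : ∀ i, ∃ j ≤ m, T j = θ i)
    {w : ι → ℝ} (hw : ∀ i, 0 ≤ w i) :
    ∃ ψ, ∑ i, w i ≤ m * sin (π / (2 * m)) * ∑ i, w i * |sin (ψ - θ i)| := by
  set c : ℕ → ℝ := fun k => sin ((T (k + 1) - T k) / 2)
  set F : ℝ → ℝ := fun ψ => ∑ i, w i * |sin (ψ - θ i)|
  set μ : ℕ → ℝ := fun k => (T k + T (k + 1)) / 2
  have hm : m ≠ 0 := by
    rintro rfl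
    linarith [pi_pos]
  obtain ⟨K, -, hK⟩ := (Finset.range m).exists_max_image (fun k => F (μ k))
    (Finset.nonempty_range_iff.2 hm)
  have hc_nonneg : ∀ k ∈ Finset.range m, 0 ≤ c k := fun k hk => by
    have hgap := gap_mem_Icc hT hTm (Finset.mem_range.1 hk)
    exact sin_nonneg_of_nonneg_of_le_pi (by linarith [hgap.1]) (by linarith [hgap.2, pi_pos])
  have hF_nonneg : 0 ≤ F (μ K) := Finset.sum_nonneg fun i _ => mul_nonneg (hw i) (abs_nonneg _)
  have hone : ∀ i, ∑ k ∈ Finset.range m, c k * |sin (μ k - θ i)| = 1 := fun i => by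
    obtain ⟨j, hj, hji⟩ := hθ i
    rw [← hji, sum_sin_half_gap_mul_abs_sin_eq hT hTm hj]
  refine ⟨μ K, ?_⟩
  calc ∑ i, w i = ∑ i, w i * ∑ k ∈ Finset.range m, c k * |sin (μ k - θ i)| := by simp [hone]
    _ = ∑ k ∈ Finset.range m, c k * F (μ k) := by
        simp only [F, Finset.mul_sum, mul_left_comm]
        exact Finset.sum_comm
    _ ≤ ∑ k ∈ Finset.range m, c k * F (μ K) :=
        Finset.sum_le_sum fun k hk => mul_le_mul_of_nonneg_left (hK k hk) (hc_nonneg k hk)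
    _ = (∑ k ∈ Finset.range m, c k) * F (μ K) := (Finset.sum_mul ..).symm
    _ ≤ m * sin (π / (2 * m)) * F (μ K) :=
        mul_le_mul_of_nonneg_right (sum_sin_half_gap_le hT hTm) hF_nonneg

theorem exists_monotone_subdivision {m : ℕ} (hm : 0 < m) {a p : ℝ} {θ : Fin m → ℝ}
    (hθ : ∀ i, θ i ∈ Set.Ico a (a + p)) :
    ∃ T : ℕ → ℝ, Monotone T ∧ T m = T 0 + p ∧ ∀ i, ∃ j ≤ m, T j = θ i := by
  set s : Fin m → ℝ := θ ∘ Tuple.sort θ with hs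
  have hs_mono : Monotone s := Tuple.monotone_sort θ
  refine ⟨fun k => if h : k < m then s ⟨k, h⟩ else s ⟨0, hm⟩ + p, ?_, by simp [hm], fun i => ?_⟩
  · intro k l hkl
    dsimp only
    split_ifs with hk hl hl
    · exact hs_mono hkl
    · linarith [(hθ (Tuple.sort θ ⟨k, hk⟩)).2, (hθ (Tuple.sort θ ⟨0, hm⟩)).1,
        show s ⟨k, hk⟩ = θ (Tuple.sort θ ⟨k, hk⟩) from rfl,
        show s ⟨0, hm⟩ = θ (Tuple.sort θ ⟨0, hm⟩) from rfl]
    · omega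
    · exact le_rfl
  · refine ⟨((Tuple.sort θ).symm i : Fin m), Fin.is_le', ?_⟩
    simp [hs]

theorem exists_sum_le_mul_sum_abs_sin {m : ℕ} (θ : Fin m → ℝ) {w : Fin m → ℝ}
    (hw : ∀ i, 0 ≤ w i) :
    ∃ ψ, ∑ i, w i ≤ m * sin (π / (2 * m)) * ∑ i, w i * |sin (ψ - θ i)| := by
  rcases m.eq_zero_or_pos with rfl | hm
  · exact ⟨0, by simp⟩
  obtain ⟨T, hT, hTm, hTθ⟩ := exists_monotone_subdivision hm fun i =>
    toIcoMod_mem_Ico pi_pos 0 (θ i)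
  obtain ⟨ψ, hψ⟩ := exists_sum_le_mul_sum_abs_sin_of_subdivision hT hTm hTθ hw
  have hper : Function.Periodic (fun x => |sin x|) π := fun x => by simp [sin_add_pi]
  have hmod : ∀ i, |sin (ψ - toIcoMod pi_pos 0 (θ i))| = |sin (ψ - θ i)| := fun i => by
    rw [← self_sub_toIcoDiv_zsmul, ← sub_add]
    exact hper.zsmul _ _
  exact ⟨ψ, by simpa only [hmod] using hψ⟩

theorem sum_abs_sin_equispaced_sub_le {m : ℕ} (hm : 0 < m) (θ : ℝ) :
    ∑ k : Fin m, |sin (((k : ℕ) + 1) * π / m - θ)| ≤ 1 / sin (π / (2 * m)) := by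
  have hm' : (1 : ℝ) ≤ m := by exact_mod_cast hm
  have hsin : 0 < sin (π / (2 * m)) := by
    refine sin_pos_of_pos_of_lt_pi (by positivity) ?_
    rw [div_lt_iff₀ (by positivity)]
    nlinarith [pi_pos]
  set T : ℕ → ℝ := fun k => (2 * k + 1) * π / (2 * m) with hT
  have hT_mono : Monotone T := fun k l hkl => by
    have : (k : ℝ) ≤ l := by exact_mod_cast hkl
    simp only [hT]
    gcongr
  have hTm : T m = T 0 + π := by
    simp only [hT]
    push_cast
    field_simp
    ring
  have hgap : ∀ k, (T (k + 1) - T k) / 2 = π / (2 * m) := fun k => by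
    simp only [hT]
    push_cast
    field_simp
    ring
  have hmid : ∀ k, (T k + T (k + 1)) / 2 = (k + 1) * π / m := fun k => by
    simp only [hT]
    push_cast
    field_simp
    ring
  have h := sum_sin_half_gap_mul_abs_sin_le hT_mono hTm θ
  simp only [hgap, hmid, ← Finset.mul_sum] at h
  rwa [Fin.sum_univ_eq_sum_range (fun k => |sin ((k + 1) * π / m - θ)|), le_div_iff₀' hsin]

theorem one_lt_mul_sin_pi_div {m : ℕ} (hm : 2 ≤ m) : 1 < m * sin (π / (2 * m)) := by
  have hm' : (2 : ℝ) ≤ m := by exact_mod_cast hm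
  have hJordan : 2 / π * (π / (2 * m)) < sin (π / (2 * m)) := by
    refine mul_lt_sin (by positivity) ?_
    gcongr
    linarith
  rw [show 2 / π * (π / (2 * m)) = 1 / m by field_simp] at hJordan
  rwa [div_lt_iff₀' (by positivity)] at hJordan

theorem one_sub_one_div_mul_sin_pos {m : ℕ} (hm : 2 ≤ m) :
    0 < 1 - 1 / (m * sin (π / (2 * m))) := by
  have hS := one_lt_mul_sin_pi_div hm
  exact sub_pos.2 ((div_lt_one (by linarith)).2 hS)

/-- The unit vector at angle `θ`, used to pass between vectors of the plane and angles. -/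
def unitVec (θ : ℝ) : E2 := vec2 (cos θ) (sin θ)

theorem repr_exp_mul_I (θ : ℝ) :
    Complex.orthonormalBasisOneI.repr (Complex.exp (θ * Complex.I)) = unitVec θ := by
  ext i
  fin_cases i <;>
    simp [unitVec, vec2, Complex.exp_ofReal_mul_I_re, Complex.exp_ofReal_mul_I_im]

theorem norm_unitVec (θ : ℝ) : ‖unitVec θ‖ = 1 := by
  rw [← repr_exp_mul_I, LinearIsometryEquiv.norm_map, Complex.norm_exp_ofReal_mul_I]

theorem exists_eq_norm_smul_unitVec (x : E2) : ∃ θ, x = ‖x‖ • unitVec θ := by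
  obtain ⟨z, rfl⟩ := Complex.orthonormalBasisOneI.repr.surjective x
  refine ⟨z.arg, ?_⟩
  rw [LinearIsometryEquiv.norm_map, ← repr_exp_mul_I, ← map_smul, Complex.real_smul,
    Complex.norm_mul_exp_arg_mul_I]

theorem inner_unitVec (α β : ℝ) : ⟪unitVec α, unitVec β⟫ = cos (α - β) := by
  simp only [unitVec, vec2, PiLp.inner_apply, Fin.sum_univ_two, WithLp.equiv_symm_apply,
    Matrix.cons_val_zero, Matrix.cons_val_one, RCLike.inner_apply, conj_trivial, cos_sub]
  ring

theorem unitVec_add_pi (θ : ℝ) : unitVec (θ + π) = -unitVec θ := by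
  ext i
  fin_cases i <;> simp [unitVec, vec2]

theorem csq_unitVec (θ : ℝ) : csq (unitVec θ) = unitVec (2 * θ) := by
  ext i
  fin_cases i
  · simp [csq, unitVec, vec2, toFun2, cos_two_mul']
  · simp [csq, unitVec, vec2, toFun2, sin_two_mul, mul_right_comm]

theorem inner_csq (a u : E2) : ⟪csq a, csq u⟫ = 2 * ⟪a, u⟫ ^ 2 - ‖a‖ ^ 2 * ‖u‖ ^ 2 := by
  simp only [EuclideanSpace.real_norm_sq_eq, csq, vec2, toFun2, PiLp.inner_apply,
    Fin.sum_univ_two, WithLp.equiv_symm_apply, WithLp.equiv_apply, Matrix.cons_val_zero,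
    Matrix.cons_val_one, RCLike.inner_apply, conj_trivial]
  ring

theorem norm_csq (v : E2) : ‖csq v‖ = ‖v‖ ^ 2 := by
  have h := inner_csq v v
  simp only [real_inner_self_eq_norm_sq] at h
  exact (sq_eq_sq₀ (norm_nonneg _) (by positivity)).1 (by linarith)

theorem exists_csq_eq_and_csq_eq_neg {w : E2} (hw : ‖w‖ = 1) :
    ∃ u v : E2, ‖u‖ = 1 ∧ ‖v‖ = 1 ∧ csq u = w ∧ csq v = -w := by
  obtain ⟨θ, hθ⟩ := exists_eq_norm_smul_unitVec w
  rw [hw, one_smul] at hθ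
  refine ⟨unitVec (θ / 2), unitVec (θ / 2 + π / 2), norm_unitVec _, norm_unitVec _, ?_, ?_⟩
  · rw [csq_unitVec, hθ]
    ring_nf
  · rw [csq_unitVec, hθ, ← unitVec_add_pi]
    ring_nf

theorem exists_sum_norm_le_mul_sum_abs_inner {m : ℕ} (z : Fin m → E2) :
    ∃ u : E2, ‖u‖ = 1 ∧ ∑ j, ‖z j‖ ≤ m * sin (π / (2 * m)) * ∑ j, |⟪z j, u⟫| := by
  choose θ hθ using fun j => exists_eq_norm_smul_unitVec (z j)
  obtain ⟨ψ, hψ⟩ := exists_sum_le_mul_sum_abs_sin θ fun j => norm_nonneg (z j)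
  have hinner : ∀ j, |⟪z j, unitVec (ψ - π / 2)⟫| = ‖z j‖ * |sin (ψ - θ j)| := fun j => by
    rw [congrArg (⟪·, unitVec (ψ - π / 2)⟫) (hθ j), real_inner_smul_left, inner_unitVec, abs_mul,
      abs_norm, ← sub_add, cos_add_pi_div_two, ← sin_neg, neg_sub]
  exact ⟨unitVec (ψ - π / 2), norm_unitVec _, by simpa only [hinner] using hψ⟩

theorem sum_abs_inner_equispaced_le {m : ℕ} (hm : 0 < m) (u : E2) :
    ∑ j : Fin m, |⟪unitVec (((j : ℕ) + 1) * π / m), u⟫| ≤ 1 / sin (π / (2 * m)) * ‖u‖ := by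
  obtain ⟨θ, hθ⟩ := exists_eq_norm_smul_unitVec u
  have hinner : ∀ α, |⟪unitVec α, u⟫| = |sin (α - (θ - π / 2))| * ‖u‖ := fun α => by
    rw [congrArg (⟪unitVec α, ·⟫) hθ, real_inner_smul_right, inner_unitVec, abs_mul, abs_norm,
      ← sub_add, sin_add_pi_div_two, mul_comm]
  simp only [hinner, ← Finset.sum_mul]
  exact mul_le_mul_of_nonneg_right (sum_abs_sin_equispaced_sub_le hm _) (norm_nonneg u)

theorem abs_sub_abs_sq (p q : ℝ) : (|p| - |q|) ^ 2 = min ((p + q) ^ 2) ((p - q) ^ 2) := by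
  rcases le_total 0 (p * q) with h | h
  · rw [sub_sq, sq_abs, sq_abs, mul_assoc, ← abs_mul, abs_of_nonneg h,
      min_eq_right (by linarith)]
    ring
  · rw [sub_sq, sq_abs, sq_abs, mul_assoc, ← abs_mul, abs_of_nonpos h, min_eq_left (by linarith)]
    ring

section Lipschitz

variable {m : ℕ} {a : Fin m → E2}

/-- The squared distance `‖Φ_a x - Φ_a y‖ ^ 2` in the coordinates `u = x + y`, `v = x - y`, in
which `pdist x y` is `min ‖v‖ ‖u‖`. -/
def minEnergy (a : Fin m → E2) (u v : E2) : ℝ := ∑ j, min (⟪a j, u⟫ ^ 2) (⟪a j, v⟫ ^ 2)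

theorem norm_PhiMap_sub_sq (a : Fin m → E2) (x y : E2) :
    ‖PhiMap a x - PhiMap a y‖ ^ 2 = minEnergy a (x + y) (x - y) := by
  simp [EuclideanSpace.real_norm_sq_eq, PhiMap, minEnergy, abs_sub_abs_sq, inner_add_right,
    inner_sub_right]

theorem minEnergy_comm (a : Fin m → E2) (u v : E2) : minEnergy a u v = minEnergy a v u := by
  simp only [minEnergy, min_comm]

theorem minEnergy_self (a : Fin m → E2) (u : E2) : minEnergy a u u = ∑ j, ⟪a j, u⟫ ^ 2 := by
  simp only [minEnergy, min_self]

theorem minEnergy_nonneg (a : Fin m → E2) (u v : E2) : 0 ≤ minEnergy a u v :=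
  Finset.sum_nonneg fun _ _ => le_min (sq_nonneg _) (sq_nonneg _)

theorem minEnergy_le_minEnergy_self (a : Fin m → E2) (u v : E2) :
    minEnergy a u v ≤ minEnergy a u u := by
  rw [minEnergy_self]
  exact Finset.sum_le_sum fun _ _ => min_le_left _ _

theorem minEnergy_smul_le (a : Fin m → E2) {t : ℝ} (ht : |t| ≤ 1) (u v : E2) :
    minEnergy a (t • u) v ≤ minEnergy a u v := by
  refine Finset.sum_le_sum fun j _ => min_le_min_right _ ?_
  rw [real_inner_smul_right, mul_pow]
  exact mul_le_of_le_one_left (sq_nonneg _) ((sq_le_one_iff_abs_le_one t).2 ht)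

theorem minEnergy_eq_of_norm_eq (a : Fin m → E2) {u v : E2} (huv : ‖u‖ = ‖v‖) :
    minEnergy a u v = (2 * (∑ j, ‖a j‖ ^ 2) * ‖u‖ ^ 2 + ⟪∑ j, csq (a j), csq u + csq v⟫ -
      ∑ j, |⟪csq (a j), csq u - csq v⟫|) / 4 := by
  rw [minEnergy, Finset.mul_sum, Finset.sum_mul, sum_inner, ← Finset.sum_add_distrib,
    ← Finset.sum_sub_distrib, Finset.sum_div]
  refine Finset.sum_congr rfl fun j _ => ?_
  have hu := inner_csq (a j) u
  have hv := inner_csq (a j) v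
  rw [← huv] at hv
  rw [inner_add_right, inner_sub_right]
  rcases le_total (⟪a j, u⟫ ^ 2) (⟪a j, v⟫ ^ 2) with h | h
  · rw [min_eq_left h, abs_of_nonpos (by linarith)]
    linarith
  · rw [min_eq_right h, abs_of_nonneg (by linarith)]
    linarith

theorem nonneg_of_mem_ratioSet {r : ℝ} (hr : r ∈ ratioSet a) : 0 ≤ r := by
  obtain ⟨x, y, -, rfl⟩ := hr
  exact div_nonneg (norm_nonneg _) (le_min (norm_nonneg _) (norm_nonneg _))

theorem exists_sq_mul_eq_minEnergy_of_mem_ratioSet {r : ℝ} (hr : r ∈ ratioSet a) :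
    ∃ u v : E2, 0 < ‖v‖ ∧ ‖v‖ ≤ ‖u‖ ∧ r ^ 2 * ‖v‖ ^ 2 = minEnergy a u v := by
  obtain ⟨x, y, hxy, rfl⟩ := hr
  have hpos : 0 < pdist x y := (le_min (norm_nonneg _) (norm_nonneg _)).lt_of_ne' hxy
  have hsq : (‖PhiMap a x - PhiMap a y‖ / pdist x y) ^ 2 * pdist x y ^ 2 =
      minEnergy a (x + y) (x - y) := by
    rw [← mul_pow, div_mul_cancel₀ _ hxy, norm_PhiMap_sub_sq]
  rcases le_total ‖x - y‖ ‖x + y‖ with h | h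
  · have hdist : pdist x y = ‖x - y‖ := min_eq_left h
    exact ⟨x + y, x - y, hdist ▸ hpos, h, by rwa [← hdist]⟩
  · have hdist : pdist x y = ‖x + y‖ := min_eq_right h
    exact ⟨x - y, x + y, hdist ▸ hpos, h, by rwa [← hdist, minEnergy_comm]⟩

theorem sqrt_minEnergy_mem_ratioSet (a : Fin m → E2) {u v : E2} (hu : ‖u‖ = 1) (hv : ‖v‖ = 1) :
    √(minEnergy a u v) ∈ ratioSet a := by
  set x : E2 := (1 / 2 : ℝ) • (u + v) with hx
  set y : E2 := (1 / 2 : ℝ) • (u - v) with hy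
  have hadd : x + y = u := by rw [hx, hy]; module
  have hsub : x - y = v := by rw [hx, hy]; module
  have hdist : pdist x y = 1 := by rw [pdist, hadd, hsub, hu, hv, min_self]
  refine ⟨x, y, by simp [hdist], ?_⟩
  rw [hdist, div_one, ← Real.sqrt_sq (norm_nonneg (PhiMap a x - PhiMap a y)), norm_PhiMap_sub_sq,
    hadd, hsub]

theorem ratioSet_nonempty (a : Fin m → E2) : (ratioSet a).Nonempty :=
  ⟨_, sqrt_minEnergy_mem_ratioSet a (norm_unitVec 0) (norm_unitVec 0)⟩

theorem lipL_nonneg (a : Fin m → E2) : 0 ≤ lipL a :=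
  Real.sInf_nonneg fun _ => nonneg_of_mem_ratioSet

theorem lipU_nonneg (a : Fin m → E2) : 0 ≤ lipU a :=
  Real.sSup_nonneg fun _ => nonneg_of_mem_ratioSet

theorem lipL_sq_le_minEnergy (a : Fin m → E2) {u v : E2} (hu : ‖u‖ = 1) (hv : ‖v‖ = 1) :
    lipL a ^ 2 ≤ minEnergy a u v := by
  have h : lipL a ≤ √(minEnergy a u v) :=
    csInf_le ⟨0, fun _ => nonneg_of_mem_ratioSet⟩ (sqrt_minEnergy_mem_ratioSet a hu hv)
  exact (Real.le_sqrt (lipL_nonneg a) (minEnergy_nonneg a u v)).1 h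

theorem le_lipL_sq {c : ℝ} (hc : ∀ u v : E2, ‖u‖ = ‖v‖ → c * ‖v‖ ^ 2 ≤ minEnergy a u v) :
    c ≤ lipL a ^ 2 := by
  refine (Real.sqrt_le_left (lipL_nonneg a)).1 (le_csInf (ratioSet_nonempty a) fun r hr => ?_)
  refine (Real.sqrt_le_left (nonneg_of_mem_ratioSet hr)).2 ?_
  obtain ⟨u, v, hv, hvu, hr_sq⟩ := exists_sq_mul_eq_minEnergy_of_mem_ratioSet hr
  have hu : 0 < ‖u‖ := hv.trans_le hvu
  have ht : |‖v‖ / ‖u‖| ≤ 1 := by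
    rw [abs_of_nonneg (by positivity)]
    exact (div_le_one hu).2 hvu
  have hnorm : ‖(‖v‖ / ‖u‖) • u‖ = ‖v‖ := by
    rw [norm_smul, Real.norm_of_nonneg (by positivity), div_mul_cancel₀ _ hu.ne']
  refine le_of_mul_le_mul_right ?_ (pow_pos hv 2)
  exact (hc _ v hnorm).trans ((minEnergy_smul_le a ht u v).trans_eq hr_sq.symm)

theorem sq_le_of_mem_ratioSet {C : ℝ} (hC : ∀ u, ∑ j, ⟪a j, u⟫ ^ 2 ≤ C * ‖u‖ ^ 2) {r : ℝ}
    (hr : r ∈ ratioSet a) : r ^ 2 ≤ C := by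
  obtain ⟨u, v, hv, -, hr_sq⟩ := exists_sq_mul_eq_minEnergy_of_mem_ratioSet hr
  refine le_of_mul_le_mul_right ?_ (pow_pos hv 2)
  rw [hr_sq, minEnergy_comm]
  exact (minEnergy_le_minEnergy_self a v u).trans ((minEnergy_self a v).trans_le (hC v))

theorem lipU_sq_le {C : ℝ} (hC : ∀ u, ∑ j, ⟪a j, u⟫ ^ 2 ≤ C * ‖u‖ ^ 2) : lipU a ^ 2 ≤ C := by
  have hC_nonneg : 0 ≤ C :=
    (sq_nonneg _).trans (sq_le_of_mem_ratioSet hC (ratioSet_nonempty a).some_mem)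
  refine (Real.le_sqrt (lipU_nonneg a) hC_nonneg).1 ?_
  exact csSup_le (ratioSet_nonempty a) fun r hr =>
    Real.le_sqrt_of_sq_le (sq_le_of_mem_ratioSet hC hr)

theorem sum_inner_sq_le (a : Fin m → E2) (u : E2) :
    ∑ j, ⟪a j, u⟫ ^ 2 ≤ (∑ j, ‖a j‖ ^ 2) * ‖u‖ ^ 2 := by
  rw [Finset.sum_mul]
  refine Finset.sum_le_sum fun j _ => ?_
  rw [← mul_pow]
  exact sq_le_sq' (neg_le_of_abs_le (abs_real_inner_le_norm _ _)) (real_inner_le_norm _ _)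

theorem bddAbove_ratioSet (a : Fin m → E2) : BddAbove (ratioSet a) :=
  ⟨√(∑ j, ‖a j‖ ^ 2), fun _ hr =>
    Real.le_sqrt_of_sq_le (sq_le_of_mem_ratioSet (sum_inner_sq_le a) hr)⟩

theorem sum_inner_sq_le_lipU_sq (a : Fin m → E2) {u : E2} (hu : ‖u‖ = 1) :
    ∑ j, ⟪a j, u⟫ ^ 2 ≤ lipU a ^ 2 := by
  rw [← minEnergy_self]
  exact (Real.sqrt_le_left (lipU_nonneg a)).1
    (le_csSup (bddAbove_ratioSet a) (sqrt_minEnergy_mem_ratioSet a hu hu))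

theorem sum_norm_sq_le_two_mul_lipU_sq (a : Fin m → E2) :
    ∑ j, ‖a j‖ ^ 2 ≤ 2 * lipU a ^ 2 := by
  let b := EuclideanSpace.basisFun (Fin 2) ℝ
  calc ∑ j, ‖a j‖ ^ 2 = ∑ i, ∑ j, ⟪a j, b i⟫ ^ 2 := by
        rw [Finset.sum_comm]
        simp only [b.sum_sq_inner_left]
    _ ≤ ∑ _i : Fin 2, lipU a ^ 2 :=
        Finset.sum_le_sum fun i _ => sum_inner_sq_le_lipU_sq a (b.norm_eq_one i)
    _ = 2 * lipU a ^ 2 := by simp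

theorem two_mul_lipL_sq_le (a : Fin m → E2) {w : E2} (hw : ‖w‖ = 1) :
    2 * lipL a ^ 2 ≤ ∑ j, ‖a j‖ ^ 2 - ∑ j, |⟪csq (a j), w⟫| := by
  obtain ⟨u, v, hu, hv, hcu, hcv⟩ := exists_csq_eq_and_csq_eq_neg hw
  have h := lipL_sq_le_minEnergy a hu hv
  rw [minEnergy_eq_of_norm_eq a (hu.trans hv.symm), hcu, hcv, hu, add_neg_cancel, inner_zero_right,
    sub_neg_eq_add, ← two_smul ℝ w] at h
  simp only [real_inner_smul_right, abs_mul, abs_two, ← Finset.mul_sum] at h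
  linarith

theorem lipL_sq_le_mul_lipU_sq (hm : 2 ≤ m) (a : Fin m → E2) :
    lipL a ^ 2 ≤ (1 - 1 / (m * sin (π / (2 * m)))) * lipU a ^ 2 := by
  have hS := one_lt_mul_sin_pi_div hm
  have hK := one_sub_one_div_mul_sin_pos hm
  set S := m * sin (π / (2 * m))
  set P := ∑ j, ‖a j‖ ^ 2
  obtain ⟨w, hw, hpoly⟩ := exists_sum_norm_le_mul_sum_abs_inner fun j => csq (a j)
  simp only [norm_csq] at hpoly
  have hdiv : P / S ≤ ∑ j, |⟪csq (a j), w⟫| := (div_le_iff₀' (by linarith)).2 hpoly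
  have hmul := mul_le_mul_of_nonneg_left (sum_norm_sq_le_two_mul_lipU_sq a) hK.le
  have hKP : (1 - 1 / S) * P = P - P / S := by ring
  linarith [two_mul_lipL_sq_le a hw]

theorem two_mul_lipU_sq_le_of_sum_csq_eq_zero (hsum : ∑ j, csq (a j) = 0) :
    2 * lipU a ^ 2 ≤ ∑ j, ‖a j‖ ^ 2 := by
  have htight : ∀ u, ∑ j, ⟪a j, u⟫ ^ 2 ≤ (∑ j, ‖a j‖ ^ 2) / 2 * ‖u‖ ^ 2 := fun u => by
    have h := minEnergy_eq_of_norm_eq a (rfl : ‖u‖ = ‖u‖)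
    simp only [minEnergy_self, hsum, inner_zero_left, sub_self, inner_zero_right, abs_zero,
      Finset.sum_const_zero] at h
    linarith
  linarith [lipU_sq_le htight]

theorem le_two_mul_lipL_sq_of_sum_csq_eq_zero (hsum : ∑ j, csq (a j) = 0) {D : ℝ}
    (hD : ∀ w, ∑ j, |⟪csq (a j), w⟫| ≤ D * ‖w‖) :
    ∑ j, ‖a j‖ ^ 2 - D ≤ 2 * lipL a ^ 2 := by
  have hD_nonneg : 0 ≤ D := by
    have h := hD (unitVec 0)
    rw [norm_unitVec, mul_one] at h
    exact (Finset.sum_nonneg fun _ _ => abs_nonneg _).trans h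
  suffices h : (∑ j, ‖a j‖ ^ 2 - D) / 2 ≤ lipL a ^ 2 by linarith
  refine le_lipL_sq fun u v huv => ?_
  have hdiff : ‖csq u - csq v‖ ≤ 2 * ‖v‖ ^ 2 := by
    have h := norm_sub_le (csq u) (csq v)
    rw [norm_csq, norm_csq, huv] at h
    linarith
  have hbound := (hD (csq u - csq v)).trans (mul_le_mul_of_nonneg_left hdiff hD_nonneg)
  rw [minEnergy_eq_of_norm_eq a huv, hsum, inner_zero_left, huv]
  linarith

theorem ofReal_rpow_neg_half {K : ℝ} (hK : 0 < K) :
    ENNReal.ofReal K ^ (-(1 / 2) : ℝ) = ENNReal.ofReal (1 / √K) := by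
  rw [ENNReal.ofReal_rpow_of_pos hK, Real.rpow_neg hK.le, ← Real.sqrt_eq_rpow, one_div (√K)]

theorem rpow_neg_half_le_condNum {K : ℝ} (hK : 0 < K) (h : lipL a ^ 2 ≤ K * lipU a ^ 2) :
    ENNReal.ofReal K ^ (-(1 / 2) : ℝ) ≤ condNum a := by
  rw [ofReal_rpow_neg_half hK, condNum]
  split_ifs with hL
  · exact le_top
  · have hL_pos : 0 < lipL a := (lipL_nonneg a).lt_of_ne' hL
    refine ENNReal.ofReal_le_ofReal ?_
    rw [div_le_div_iff₀ (Real.sqrt_pos.2 hK) hL_pos, one_mul, mul_comm]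
    refine le_of_sq_le_sq ?_ (mul_nonneg (Real.sqrt_nonneg K) (lipU_nonneg a))
    rwa [mul_pow, Real.sq_sqrt hK.le]

theorem condNum_le_rpow_neg_half {K : ℝ} (hK : 0 < K) (hL : lipL a ≠ 0)
    (h : K * lipU a ^ 2 ≤ lipL a ^ 2) : condNum a ≤ ENNReal.ofReal K ^ (-(1 / 2) : ℝ) := by
  rw [ofReal_rpow_neg_half hK, condNum, if_neg hL]
  refine ENNReal.ofReal_le_ofReal ?_
  rw [div_le_div_iff₀ ((lipL_nonneg a).lt_of_ne' hL) (Real.sqrt_pos.2 hK), one_mul, mul_comm]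
  refine le_of_sq_le_sq ?_ (lipL_nonneg a)
  rwa [mul_pow, Real.sq_sqrt hK.le]

end Lipschitz

section SignedFrame

variable {m : ℕ} {ε : Fin m → ℝ}

/-- The frame of unit vectors at angle `(j + 1) * π / (2 * m)`, turned by a right angle where
`ε j ≠ 1`. For signs `ε`, squaring sends its vectors to the signed equispaced directions
`ε j • unitVec ((j + 1) * π / m)`. -/
def signedFrame (ε : Fin m → ℝ) : Fin m → E2 := fun j =>
  if ε j = 1 then unitVec (((j : ℕ) + 1) * π / (2 * m))
  else unitVec (((j : ℕ) + 1) * π / (2 * m) + π / 2)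

theorem norm_signedFrame (ε : Fin m → ℝ) (j : Fin m) : ‖signedFrame ε j‖ = 1 := by
  unfold signedFrame
  split_ifs <;> exact norm_unitVec _

theorem csq_signedFrame (hε : ∀ j, ε j = 1 ∨ ε j = -1) (j : Fin m) :
    csq (signedFrame ε j) = ε j • unitVec (((j : ℕ) + 1) * π / m) := by
  have hdouble : 2 * (((j : ℕ) + 1) * π / (2 * m)) = ((j : ℕ) + 1) * π / m := by field_simp
  rcases hε j with h | h
  · rw [signedFrame, if_pos h, h, one_smul, csq_unitVec, hdouble]
  · rw [signedFrame, if_neg (by norm_num [h]), h, neg_one_smul, csq_unitVec, ← unitVec_add_pi,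
      mul_add, hdouble, mul_div_cancel₀ π two_ne_zero]

theorem sum_smul_unitVec_eq_zero
    (hzero : ∑ j : Fin m, (ε j : ℂ) * Complex.exp (π * Complex.I / m) ^ ((j : ℕ) + 1) = 0) :
    ∑ j : Fin m, ε j • unitVec (((j : ℕ) + 1) * π / m) = 0 := by
  rw [← map_zero Complex.orthonormalBasisOneI.repr, ← hzero, map_sum]
  refine Finset.sum_congr rfl fun j _ => ?_
  rw [← Complex.real_smul, map_smul, ← repr_exp_mul_I, ← Complex.exp_nat_mul]
  push_cast
  ring_nf

theorem sum_abs_inner_csq_signedFrame_le (hm : 0 < m) (hε : ∀ j, ε j = 1 ∨ ε j = -1) (w : E2) :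
    ∑ j, |⟪csq (signedFrame ε j), w⟫| ≤ 1 / sin (π / (2 * m)) * ‖w‖ := by
  have hε_abs (j : Fin m) : |ε j| = 1 := (abs_eq zero_le_one).2 (hε j)
  simp only [csq_signedFrame hε, real_inner_smul_left, abs_mul, hε_abs, one_mul]
  exact sum_abs_inner_equispaced_le hm w

theorem condNum_signedFrame_le (hm : 2 ≤ m) (hε : ∀ j, ε j = 1 ∨ ε j = -1)
    (hzero : ∑ j : Fin m, (ε j : ℂ) * Complex.exp (π * Complex.I / m) ^ ((j : ℕ) + 1) = 0) :
    condNum (signedFrame ε) ≤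
      ENNReal.ofReal (1 - 1 / (m * sin (π / (2 * m)))) ^ (-(1 / 2) : ℝ) := by
  have hK := one_sub_one_div_mul_sin_pos hm
  have hm_pos : (0 : ℝ) < m := by exact_mod_cast (show 0 < m by omega)
  have hsum : ∑ j, csq (signedFrame ε j) = 0 := by
    simpa only [csq_signedFrame hε] using sum_smul_unitVec_eq_zero hzero
  have hU := two_mul_lipU_sq_le_of_sum_csq_eq_zero hsum
  have hL := le_two_mul_lipL_sq_of_sum_csq_eq_zero hsum
    (sum_abs_inner_csq_signedFrame_le (by omega) hε)
  have hsplit : m - 1 / sin (π / (2 * m)) = (1 - 1 / (m * sin (π / (2 * m)))) * m := by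
    field_simp
  simp only [norm_signedFrame, one_pow, Finset.sum_const, Finset.card_univ, Fintype.card_fin,
    nsmul_eq_mul, mul_one, hsplit] at hU hL
  have hL_pos : 0 < lipL (signedFrame ε) ^ 2 := by linarith [mul_pos hK hm_pos]
  refine condNum_le_rpow_neg_half hK (pow_ne_zero_iff two_ne_zero |>.1 hL_pos.ne') ?_
  linarith [mul_le_mul_of_nonneg_left hU hK.le]

end SignedFrame

/-- If `m ≥ 3` has an odd factor and `ε ∈ {±1}^m` satisfies
`∑ ε_j e^{ijπ/m} = 0`, then the frame with `a_j = (cos(jπ/(2m)), sin(jπ/(2m)))` when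
`ε_j = 1` and `a_j = (cos(jπ/(2m)+π/2), sin(jπ/(2m)+π/2))` when `ε_j = −1` attains the
minimal condition number `(1 − 1/(m·sin(π/(2m))))^{−1/2}`. -/
theorem stmt16 {m : ℕ} (hm : 3 ≤ m) (hodd : ∃ k, Odd k ∧ 1 < k ∧ k ∣ m)
    (ε : Fin m → ℝ) (hε : ∀ j, ε j = 1 ∨ ε j = -1)
    (hzero : ∑ j : Fin m, (ε j : ℂ) * Complex.exp (π * Complex.I / m) ^ ((j : ℕ) + 1) = 0)
    (a : Fin m → E2)
    (ha : ∀ j, a j = if ε j = 1 then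
        vec2 (Real.cos (((j : ℕ) + 1) * π / (2 * m))) (Real.sin (((j : ℕ) + 1) * π / (2 * m)))
      else
        vec2 (Real.cos (((j : ℕ) + 1) * π / (2 * m) + π / 2))
          (Real.sin (((j : ℕ) + 1) * π / (2 * m) + π / 2))) :
    condNum a = ⨅ M : Fin m → E2, condNum M ∧
    condNum a = ENNReal.ofReal (1 - 1 / (m * Real.sin (π / (2 * m)))) ^ (-(1 / 2) : ℝ) := by
  have hK := one_sub_one_div_mul_sin_pos (show 2 ≤ m by omega)
  have hmin (M : Fin m → E2) :=
    rpow_neg_half_le_condNum hK (lipL_sq_le_mul_lipU_sq (by omega) M)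
  obtain rfl : a = signedFrame ε := funext ha
  have heq := (condNum_signedFrame_le (by omega) hε hzero).antisymm (hmin (signedFrame ε))
  exact ⟨le_antisymm (heq ▸ le_iInf hmin) (iInf_le _ _), heq⟩
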